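/- arXiv:2509.14073 — 4 statements merged into one kernel-verified Lean document; each statement's English description precedes it below -/
import Mathlib

section
/- For τ > 0 define Q(τ) := (8τ / (√3 · η(2iτ))) · f(τ), where f(τ) := Σ_{n=1}^∞ (−1)^{n−1} n sin(2πn/3) exp(−(2π/3) n² τ) and η(2iτ) := e^{−πτ/6} ∏_{n=1}^∞ (1 − e^{−4πnτ}). Then, as τ → ∞, Q(τ) = 4τ e^{−πτ/2} + 8τ e^{−5πτ/2} + O(τ e^{−9πτ/2}); that is, there exist constants C > 0 and τ₀ > 0 such that |Q(τ) − 4τ e^{−πτ/2} − 8τ e^{−5πτ/2}| ≤ C τ e^{−9πτ/2} for all τ ≥ τ₀. -/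
open Real Filter

/-- `f τ = Σ_{n=1}^∞ (−1)^{n−1} n sin(2πn/3) exp(−(2π/3) n² τ)`. The `n = 0` term vanishes,
and for `n ≥ 1` one has `(−1)^{n+1} = (−1)^{n−1}`. -/
noncomputable def f (τ : ℝ) : ℝ :=
  ∑' n : ℕ, (-1 : ℝ) ^ (n + 1) * n * Real.sin (2 * π * n / 3) * Real.exp (-(2 * π / 3) * n ^ 2 * τ)

/-- The Dedekind eta function `η(2iτ) = e^{−πτ/6} ∏_{n=1}^∞ (1 − e^{−4πnτ})`. -/
noncomputable def dedekindEta (τ : ℝ) : ℝ :=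
  Real.exp (-π * τ / 6) * ∏' n : ℕ, (1 - Real.exp (-4 * π * (n + 1) * τ))

/-- `Q(τ) = (8τ / (√3 η(2iτ))) f(τ)`. -/
noncomputable def Q (τ : ℝ) : ℝ := 8 * τ / (Real.sqrt 3 * dedekindEta τ) * f τ

open Asymptotics Topology

/-!
With `φ(x) = ∏_{n ≥ 1} (1 - xⁿ)` one has `η(2iτ) = e^{-πτ/6} φ(e^{-4πτ})`. Since
`φ(x)⁻¹ = 1 + O(x)` at `0`, dividing by `η` multiplies by `e^{πτ/6} (1 + O(e^{-4πτ}))`. The series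
`f` is dominated by its first frequencies:
`f(τ) = (√3/2) (e^{-2πτ/3} + 2 e^{-8πτ/3}) + O(e^{-6πτ})`. In the product of the two expansions the
largest error is `e^{-πτ/2} · e^{-4πτ} = e^{-9πτ/2}`.
-/

section GeneralizedDirichletSeries

variable {ι E : Type*} [NormedAddCommGroup E] [NormedSpace ℝ E] {a : ι → E} {freq : ι → ℝ}

theorem norm_exp_neg_mul_smul_le {v : E} {Λ l t₀ t : ℝ} (hl : Λ ≤ l) (ht : t₀ ≤ t) :
    ‖exp (-l * t) • v‖ ≤ exp (-Λ * (t - t₀)) * ‖exp (-l * t₀) • v‖ := by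
  simp only [norm_smul, norm_eq_abs, abs_exp]
  rw [← mul_assoc, ← exp_add]
  gcongr
  nlinarith

theorem tsum_exp_neg_mul_smul_sub_sum_isBigO [CompleteSpace E] {Λ t₀ : ℝ} (s : Finset ι)
    (hfreq : ∀ i ∉ s, Λ ≤ freq i) (ha : Summable fun i ↦ ‖exp (-freq i * t₀) • a i‖) :
    (fun t ↦ ∑' i, exp (-freq i * t) • a i - ∑ i ∈ s, exp (-freq i * t) • a i)
      =O[atTop] fun t ↦ exp (-Λ * t) := by
  set M := ∑' i : {i // i ∉ s}, ‖exp (-freq i * t₀) • a i‖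
  refine .of_bound (exp (Λ * t₀) * M) ?_
  filter_upwards [eventually_ge_atTop t₀] with t ht
  have hmajorant := ((ha.subtype {i | i ∉ s}).hasSum).mul_left (exp (-Λ * (t - t₀)))
  have hterm (i : {i // i ∉ s}) := norm_exp_neg_mul_smul_le (v := a i) (hfreq i i.2) ht
  have hsummable : Summable fun i ↦ exp (-freq i * t) • a i :=
    s.summable_compl_iff.1 (hmajorant.summable.of_norm_bounded hterm)
  rw [← hsummable.sum_add_tsum_subtype_compl s, add_sub_cancel_left]
  calc _ ≤ exp (-Λ * (t - t₀)) * M := tsum_of_norm_bounded hmajorant hterm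
    _ = exp (Λ * t₀) * M * ‖exp (-Λ * t)‖ := by
      rw [norm_eq_abs, abs_exp, mul_right_comm, ← exp_add]
      ring_nf

end GeneralizedDirichletSeries

section EulerFunction

theorem norm_tprod_one_add_sub_one_le {ι R : Type*} [NormedCommRing R] [NormOneClass R]
    [CompleteSpace R] {u : ι → R} (hu : Summable fun i ↦ ‖u i‖) :
    ‖∏' i, (1 + u i) - 1‖ ≤ exp (∑' i, ‖u i‖) - 1 := by
  have hprod := (multipliable_one_add_of_summable hu).hasProd
  refine le_of_tendsto (hprod.sub_const 1).norm (.of_forall fun s ↦ ?_)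
  refine (s.norm_prod_one_add_sub_one_le u).trans ?_
  gcongr
  exact hu.sum_le_tsum s fun i _ ↦ norm_nonneg (u i)

variable {𝕜 : Type*} [NormedField 𝕜]

/-- Euler's function `φ(x) = ∏_{n ≥ 1} (1 - xⁿ)`, the Dedekind eta function without its prefactor.
The index is shifted by one so that it ranges over `ℕ`. -/
noncomputable def eulerFunction (x : 𝕜) : 𝕜 := ∏' n : ℕ, (1 - x ^ (n + 1))

variable [CompleteSpace 𝕜]

theorem norm_eulerFunction_sub_one_le {x : 𝕜} (hx : ‖x‖ < 1) :
    ‖eulerFunction x - 1‖ ≤ exp (‖x‖ * (1 - ‖x‖)⁻¹) - 1 := by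
  have hsum : HasSum (fun n : ℕ ↦ ‖-x ^ (n + 1)‖) (‖x‖ * (1 - ‖x‖)⁻¹) := by
    simpa only [norm_neg, norm_pow, norm_mul, pow_succ'] using
      (hasSum_geometric_of_lt_one (norm_nonneg x) hx).mul_left ‖x‖
  simpa only [eulerFunction, sub_eq_add_neg, hsum.tsum_eq] using
    norm_tprod_one_add_sub_one_le hsum.summable

theorem eulerFunction_sub_one_isBigO :
    (fun x : 𝕜 ↦ eulerFunction x - 1) =O[𝓝 0] fun x ↦ x := by
  have hbound : (fun r : ℝ ↦ exp (r * (1 - r)⁻¹) - 1) =O[𝓝 0] fun r ↦ r := by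
    have hdiff : DifferentiableAt ℝ (fun r : ℝ ↦ exp (r * (1 - r)⁻¹)) 0 := by
      fun_prop (disch := norm_num)
    simpa using hdiff.isBigO_sub
  have hnorm : Tendsto (fun x : 𝕜 ↦ ‖x‖) (𝓝 0) (𝓝 0) := tendsto_norm_zero
  refine .trans (.of_norm_eventuallyLE ?_) (hbound.comp_tendsto hnorm).of_norm_right
  filter_upwards [hnorm.eventually_lt_const one_pos] with x hx
  exact norm_eulerFunction_sub_one_le hx

theorem tendsto_eulerFunction_zero : Tendsto (eulerFunction : 𝕜 → 𝕜) (𝓝 0) (𝓝 1) := by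
  have hsub : Tendsto (fun x : 𝕜 ↦ eulerFunction x - 1) (𝓝 0) (𝓝 0) :=
    eulerFunction_sub_one_isBigO.trans_tendsto tendsto_id
  simpa using hsub.add_const 1

end EulerFunction

theorem inv_eulerFunction_sub_one_isBigO {𝕜 : Type*} [NontriviallyNormedField 𝕜]
    [CompleteSpace 𝕜] : (fun x : 𝕜 ↦ (eulerFunction x)⁻¹ - 1) =O[𝓝 0] fun x ↦ x := by
  have hinv : (fun y : 𝕜 ↦ y⁻¹ - 1) =O[𝓝 1] fun y ↦ y - 1 := by
    simpa using (differentiableAt_inv (𝕜 := 𝕜) (one_ne_zero (α := 𝕜))).isBigO_sub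
  exact (hinv.comp_tendsto tendsto_eulerFunction_zero).trans eulerFunction_sub_one_isBigO

theorem dedekindEta_eq_exp_mul_eulerFunction (τ : ℝ) :
    dedekindEta τ = exp (-π * τ / 6) * eulerFunction (exp (-4 * π * τ)) := by
  simp only [dedekindEta, eulerFunction, ← exp_nat_mul]
  congr! 5
  push_cast
  ring

theorem tendsto_exp_neg_four_pi_mul_atTop :
    Tendsto (fun τ ↦ exp (-4 * π * τ)) atTop (𝓝 0) :=
  tendsto_exp_atBot.comp (tendsto_id.const_mul_atTop_of_neg (by linarith [pi_pos]))

section Series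

theorem sin_two_pi_div_three : sin (2 * π / 3) = √3 / 2 := by
  rw [← sin_pi_div_three, ← sin_pi_sub (π / 3)]
  ring_nf

theorem sin_four_pi_div_three : sin (4 * π / 3) = -(√3 / 2) := by
  rw [← sin_pi_div_three, ← sin_add_pi]
  ring_nf

/-- The coefficient of `exp (-(2π/3) n² τ)` in the series `f τ`. -/
noncomputable def fCoeff (n : ℕ) : ℝ := (-1) ^ (n + 1) * n * sin (2 * π * n / 3)

theorem abs_fCoeff_le (n : ℕ) : |fCoeff n| ≤ n := by
  simpa [fCoeff, abs_mul] using mul_le_mul_of_nonneg_left (abs_sin_le_one _) n.cast_nonneg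

theorem f_eq_tsum_fCoeff (τ : ℝ) :
    f τ = ∑' n : ℕ, exp (-(2 * π / 3 * n ^ 2) * τ) • fCoeff n := by
  simp only [f, fCoeff, smul_eq_mul, neg_mul, mul_comm (exp _)]

theorem summable_norm_exp_smul_fCoeff :
    Summable fun n : ℕ ↦ ‖exp (-(2 * π / 3 * n ^ 2) * 1) • fCoeff n‖ := by
  have hmajorant := summable_pow_mul_exp_neg_nat_mul 1 one_pos
  refine hmajorant.of_nonneg_of_le (fun n ↦ norm_nonneg _) fun n ↦ ?_
  have hn : (n : ℝ) ≤ n ^ 2 := mod_cast Nat.le_self_pow two_ne_zero n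
  have hexp : exp (-(2 * π / 3 * n ^ 2) * 1) ≤ exp (-1 * n) := by
    rw [exp_le_exp]
    nlinarith [pi_gt_three]
  rw [norm_smul, norm_eq_abs, abs_exp, norm_eq_abs, pow_one, mul_comm]
  exact mul_le_mul (abs_fCoeff_le n) hexp (exp_pos _).le n.cast_nonneg

theorem sum_range_three_exp_smul_fCoeff (τ : ℝ) :
    ∑ n ∈ Finset.range 3, exp (-(2 * π / 3 * n ^ 2) * τ) • fCoeff n
      = √3 / 2 * (exp (-(2 * π / 3) * τ) + 2 * exp (-(8 * π / 3) * τ)) := by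
  have harg : 2 * π * 2 / 3 = 4 * π / 3 := by ring
  simp only [Finset.sum_range_succ, Finset.sum_range_zero, fCoeff, smul_eq_mul, Nat.cast_zero,
    Nat.cast_one, Nat.cast_ofNat, mul_one, harg, sin_two_pi_div_three, sin_four_pi_div_three]
  ring_nf

theorem f_sub_isBigO :
    (fun τ ↦ f τ - √3 / 2 * (exp (-(2 * π / 3) * τ) + 2 * exp (-(8 * π / 3) * τ)))
      =O[atTop] fun τ ↦ exp (-(6 * π) * τ) := by
  have hfreq (n : ℕ) (hn : n ∉ Finset.range 3) : 6 * π ≤ 2 * π / 3 * n ^ 2 := by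
    have hn3 : (3 : ℝ) ≤ n := mod_cast not_lt.1 (Finset.mem_range.not.1 hn)
    nlinarith [mul_le_mul_of_nonneg_left (pow_le_pow_left₀ zero_le_three hn3 2) pi_pos.le]
  simpa only [← f_eq_tsum_fCoeff, sum_range_three_exp_smul_fCoeff] using
    tsum_exp_neg_mul_smul_sub_sum_isBigO _ hfreq summable_norm_exp_smul_fCoeff

theorem exp_mul_f_sub_isBigO :
    (fun τ ↦ exp (π * τ / 6) * f τ
        - √3 / 2 * (exp (-π * τ / 2) + 2 * exp (-5 * π * τ / 2)))
      =O[atTop] fun τ ↦ exp (-9 * π * τ / 2) := by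
  have hmul := (isBigO_refl (fun τ ↦ exp (π * τ / 6)) atTop).mul f_sub_isBigO
  refine (hmul.congr_left fun τ ↦ ?_).trans (.of_norm_eventuallyLE ?_)
  · have hfst : exp (-π * τ / 2) = exp (π * τ / 6) * exp (-(2 * π / 3) * τ) := by
      rw [← exp_add]
      ring_nf
    have hsnd : exp (-5 * π * τ / 2) = exp (π * τ / 6) * exp (-(8 * π / 3) * τ) := by
      rw [← exp_add]
      ring_nf
    rw [hfst, hsnd]
    ring
  · filter_upwards [eventually_ge_atTop 0] with τ hτ
    rw [← exp_add, norm_eq_abs, abs_exp, exp_le_exp]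
    nlinarith [mul_nonneg pi_pos.le hτ]

end Series

theorem exp_add_two_mul_exp_isBigO :
    (fun τ ↦ exp (-π * τ / 2) + 2 * exp (-5 * π * τ / 2))
      =O[atTop] fun τ ↦ exp (-π * τ / 2) := by
  refine (isBigO_refl _ _).add (.const_mul_left (.of_norm_eventuallyLE ?_) 2)
  filter_upwards [eventually_ge_atTop 0] with τ hτ
  rw [norm_eq_abs, abs_exp, exp_le_exp]
  nlinarith [mul_nonneg pi_pos.le hτ]

theorem Q_eq_mul_exp_mul_f_mul_inv_eulerFunction (τ : ℝ) :
    Q τ = 8 / √3 * (τ * (exp (π * τ / 6) * f τ * (eulerFunction (exp (-4 * π * τ)))⁻¹)) := by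
  have hexp : exp (π * τ / 6) = (exp (-π * τ / 6))⁻¹ := by
    rw [← exp_neg]
    ring_nf
  rw [Q, dedekindEta_eq_exp_mul_eulerFunction, hexp, div_eq_mul_inv, mul_inv, mul_inv]
  ring

theorem Q_sub_isBigO :
    (fun τ ↦ Q τ - 4 * τ * exp (-π * τ / 2) - 8 * τ * exp (-5 * π * τ / 2))
      =O[atTop] fun τ ↦ τ * exp (-9 * π * τ / 2) := by
  set lead : ℝ → ℝ := fun τ ↦ √3 / 2 * (exp (-π * τ / 2) + 2 * exp (-5 * π * τ / 2)) with hlead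
  set invEuler : ℝ → ℝ := fun τ ↦ (eulerFunction (exp (-4 * π * τ)))⁻¹ with hinvEuler
  have hinv : (fun τ ↦ invEuler τ - 1) =O[atTop] fun τ ↦ exp (-4 * π * τ) :=
    inv_eulerFunction_sub_one_isBigO.comp_tendsto tendsto_exp_neg_four_pi_mul_atTop
  have hbdd : invEuler =O[atTop] fun _ ↦ (1 : ℝ) :=
    ((tendsto_eulerFunction_zero.comp tendsto_exp_neg_four_pi_mul_atTop).inv₀
      one_ne_zero).isBigO_one ℝ
  have hseries : (fun τ ↦ (exp (π * τ / 6) * f τ - lead τ) * invEuler τ)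
      =O[atTop] fun τ ↦ exp (-9 * π * τ / 2) := by
    simpa only [mul_one] using exp_mul_f_sub_isBigO.mul hbdd
  have hproduct : (fun τ ↦ lead τ * (invEuler τ - 1)) =O[atTop] fun τ ↦ exp (-9 * π * τ / 2) := by
    refine ((exp_add_two_mul_exp_isBigO.const_mul_left _).mul hinv).congr_right fun τ ↦ ?_
    rw [← exp_add]
    ring_nf
  refine (((isBigO_refl (fun τ : ℝ ↦ τ) atTop).mul (hseries.add hproduct)).const_mul_left
    (8 / √3)).congr_left fun τ ↦ ?_
  rw [Q_eq_mul_exp_mul_f_mul_inv_eulerFunction]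
  simp only [hlead, hinvEuler]
  field_simp
  ring

/-- As `τ → ∞`, `Q(τ) = 4τ e^{−πτ/2} + 8τ e^{−5πτ/2} + O(τ e^{−9πτ/2})`. -/
theorem Q_asymptotic_expansion :
    ∃ C > (0 : ℝ), ∃ τ₀ > (0 : ℝ), ∀ τ : ℝ, τ₀ ≤ τ →
      |Q τ - 4 * τ * Real.exp (-π * τ / 2) - 8 * τ * Real.exp (-5 * π * τ / 2)|
        ≤ C * τ * Real.exp (-9 * π * τ / 2) := by
  obtain ⟨C, hC, hbound⟩ := Q_sub_isBigO.exists_pos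
  obtain ⟨τ₁, hτ₁⟩ := eventually_atTop.1 hbound.bound
  refine ⟨C, hC, max τ₁ 1, by positivity, fun τ hτ ↦ ?_⟩
  have hτ_pos : 0 < τ := one_pos.trans_le ((le_max_right _ _).trans hτ)
  simpa [abs_of_pos hτ_pos, mul_assoc] using hτ₁ τ ((le_max_left _ _).trans hτ)
end

section
/- With f(τ) := Σ_{n=1}^∞ (−1)^{n−1} n sin(2πn/3) exp(−(2π/3) n² τ) for τ > 0, one has lim_{τ→0⁺} τ^{3/2} e^{π/(24τ)} f(τ) = √6/16. -/
open Real Filter Set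

/-!
The sign `(-1)^{n-1}` turns the angle `2π/3` into `π - 2π/3 = 2π/6`, so `f τ` is half the
theta-type series `sinKernel a x = ∑ 2 n sin (2πan) exp (-πn²x)` at `a = 1/6` and `x = 2τ/3`.
The functional equation (Poisson summation) gives
`x^{3/2} sinKernel a x = oddKernel a (1/x) = ∑_{n ∈ ℤ} (n + a) exp (-π(n + a)²/x)`,
and for `|a| < 1/2` its term `n = 0`, namely `a exp (-πa²/x)`, dominates all others as `x → 0⁺`.
-/

open HurwitzZeta Topology

theorem tendsto_exp_smul_tsum_exp_smul_atTop {ι E : Type*} [NormedAddCommGroup E]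
    [NormedSpace ℝ E] [CompleteSpace E] {r : ι → ℝ} {c : ι → E} {i₀ : ι} {x₀ : ℝ}
    (hr : ∀ i ≠ i₀, r i₀ < r i) (hc : Summable fun i ↦ ‖Real.exp (-r i * x₀) • c i‖) :
    Tendsto (fun x ↦ Real.exp (r i₀ * x) • ∑' i, Real.exp (-r i * x) • c i) atTop
      (𝓝 (c i₀)) := by
  classical
  have factor_eq (i : ι) (x : ℝ) :
      Real.exp (r i₀ * x) • Real.exp (-r i * x) • c i = Real.exp ((r i₀ - r i) * x) • c i := by
    rw [smul_smul, ← Real.exp_add]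
    ring_nf
  have le_of_min (i : ι) : r i₀ ≤ r i := by
    rcases eq_or_ne i i₀ with rfl | hi
    exacts [le_rfl, (hr i hi).le]
  have termwise (i : ι) : Tendsto (fun x ↦ Real.exp ((r i₀ - r i) * x) • c i) atTop
      (𝓝 (if i = i₀ then c i₀ else 0)) := by
    split_ifs with hi
    · simp [hi]
    · have decay : Tendsto (fun x ↦ Real.exp ((r i₀ - r i) * x)) atTop (𝓝 0) :=
        Real.tendsto_exp_atBot.comp (tendsto_id.const_mul_atTop_of_neg (sub_neg.2 (hr i hi)))
      simpa only [zero_smul] using decay.smul_const (c i)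
  have dominated : ∀ᶠ x in atTop, ∀ i, ‖Real.exp ((r i₀ - r i) * x) • c i‖ ≤
      Real.exp (r i₀ * x₀) * ‖Real.exp (-r i * x₀) • c i‖ := by
    filter_upwards [eventually_ge_atTop x₀] with x hx i
    rw [← Real.norm_of_nonneg (Real.exp_pos (r i₀ * x₀)).le, ← norm_smul, factor_eq, norm_smul,
      norm_smul, Real.norm_of_nonneg (Real.exp_pos _).le, Real.norm_of_nonneg (Real.exp_pos _).le]
    gcongr ?_ * _
    exact Real.exp_le_exp.2 (mul_le_mul_of_nonpos_left hx (sub_nonpos.2 (le_of_min i)))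
  have limit := tendsto_tsum_of_dominated_convergence (hc.mul_left _) termwise dominated
  simpa only [tsum_ite_eq, ← factor_eq, tsum_const_smul''] using limit

theorem sq_lt_intCast_add_sq {a : ℝ} (ha : |a| < 1 / 2) {n : ℤ} (hn : n ≠ 0) :
    a ^ 2 < (n + a) ^ 2 := by
  have one_le_abs_n : (1 : ℝ) ≤ |(n : ℝ)| := mod_cast Int.one_le_abs hn
  have abs_n_le : |(n : ℝ)| ≤ |n + a| + |a| := by simpa using abs_sub (n + a) a
  rw [sq_lt_sq]
  linarith

theorem tendsto_exp_mul_oddKernel_atTop {a : ℝ} (ha : |a| < 1 / 2) :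
    Tendsto (fun x ↦ Real.exp (π * a ^ 2 * x) * oddKernel a x) atTop (𝓝 a) := by
  have hasSum_kernel {x : ℝ} (hx : 0 < x) :
      HasSum (fun n : ℤ ↦ Real.exp (-(π * (n + a) ^ 2) * x) • (n + a)) (oddKernel a x) := by
    simpa only [smul_eq_mul, mul_comm, neg_mul] using hasSum_int_oddKernel a hx
  have min_at_zero (n : ℤ) (hn : n ≠ 0) : π * ((0 : ℤ) + a) ^ 2 < π * (n + a) ^ 2 := by
    simpa using mul_lt_mul_of_pos_left (sq_lt_intCast_add_sq ha hn) pi_pos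
  have limit := tendsto_exp_smul_tsum_exp_smul_atTop min_at_zero
    (hasSum_kernel one_pos).summable.norm
  simp only [Int.cast_zero, zero_add] at limit
  refine limit.congr' ?_
  filter_upwards [eventually_gt_atTop 0] with x hx
  rw [(hasSum_kernel hx).tsum_eq, smul_eq_mul]

theorem rpow_mul_sinKernel (a : UnitAddCircle) {x : ℝ} (hx : 0 < x) :
    x ^ (3 / 2 : ℝ) * sinKernel a x = oddKernel a x⁻¹ := by
  rw [oddKernel_functional_equation, Real.inv_rpow hx.le, one_div, inv_inv, one_div, inv_inv]

theorem tendsto_rpow_mul_exp_mul_sinKernel_nhdsGT_zero {a : ℝ} (ha : |a| < 1 / 2) :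
    Tendsto (fun x ↦ x ^ (3 / 2 : ℝ) * Real.exp (π * a ^ 2 / x) * sinKernel a x)
      (𝓝[>] 0) (𝓝 a) := by
  refine ((tendsto_exp_mul_oddKernel_atTop ha).comp tendsto_inv_nhdsGT_zero).congr' ?_
  filter_upwards [self_mem_nhdsWithin] with x hx
  rw [Function.comp_apply, ← rpow_mul_sinKernel a hx, ← div_eq_mul_inv]
  ring

theorem neg_one_pow_succ_mul_sin_nat_mul (n : ℕ) (θ : ℝ) :
    (-1) ^ (n + 1) * Real.sin (n * θ) = Real.sin (n * (π - θ)) := by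
  rw [mul_sub, Real.sin_nat_mul_pi_sub]
  ring

theorem f_eq_sinKernel {τ : ℝ} (hτ : 0 < τ) :
    f τ = sinKernel ((1 / 6 : ℝ) : UnitAddCircle) (2 / 3 * τ) / 2 := by
  rw [f, ← (hasSum_nat_sinKernel (1 / 6) (by positivity)).tsum_eq, ← tsum_div_const]
  refine tsum_congr fun n ↦ ?_
  have sin_eq : (-1) ^ (n + 1) * Real.sin (2 * π * n / 3) = Real.sin (2 * π * (1 / 6) * n) := by
    convert neg_one_pow_succ_mul_sin_nat_mul n (2 * π / 3) using 2 <;> ring_nf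
  rw [← sin_eq]
  ring_nf

theorem three_halves_rpow_three_halves : (3 / 2 : ℝ) ^ (3 / 2 : ℝ) = 3 * √6 / 4 := by
  have sqrt_six : √6 = 2 * √(3 / 2) := by
    rw [show (6 : ℝ) = 2 ^ 2 * (3 / 2) by norm_num, Real.sqrt_mul (by norm_num),
      Real.sqrt_sq zero_le_two]
  calc (3 / 2 : ℝ) ^ (3 / 2 : ℝ) = (3 / 2) ^ (1 + 1 / 2 : ℝ) := by norm_num
    _ = 3 / 2 * √(3 / 2) := by
      rw [Real.rpow_one_add' (by norm_num) (by norm_num), Real.sqrt_eq_rpow]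
    _ = 3 * √6 / 4 := by rw [sqrt_six]; ring

/-- Small-`τ` asymptotics of `f`: `lim_{τ→0⁺} τ^{3/2} e^{π/(24τ)} f(τ) = √6/16`. -/
theorem f_small_tau_asymptotics :
    Tendsto (fun τ : ℝ => τ ^ ((3 : ℝ) / 2) * Real.exp (π / (24 * τ)) * f τ)
      (nhdsWithin 0 (Ioi 0)) (nhds (Real.sqrt 6 / 16)) := by
  have rescale : Tendsto (fun τ : ℝ ↦ 2 / 3 * τ) (𝓝[>] 0) (𝓝[>] 0) :=
    tendsto_iff_comap.2 (comap_mulLeft_nhdsGT_zero (by norm_num)).ge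
  have abs_sixth_lt : |(1 / 6 : ℝ)| < 1 / 2 := by norm_num [abs_of_pos]
  have limit := ((tendsto_rpow_mul_exp_mul_sinKernel_nhdsGT_zero abs_sixth_lt).comp
    rescale).const_mul ((3 / 2 : ℝ) ^ (3 / 2 : ℝ) / 2)
  have constant_eq : (3 / 2 : ℝ) ^ (3 / 2 : ℝ) / 2 * (1 / 6) = √6 / 16 := by
    rw [three_halves_rpow_three_halves]
    ring
  rw [constant_eq] at limit
  refine limit.congr' ?_
  filter_upwards [self_mem_nhdsWithin] with τ (hτ : 0 < τ)
  have exponent_eq : π * (1 / 6) ^ 2 / (2 / 3 * τ) = π / (24 * τ) := by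
    field_simp
    norm_num
  have rpow_eq : τ ^ (3 / 2 : ℝ) = (3 / 2) ^ (3 / 2 : ℝ) * (2 / 3 * τ) ^ (3 / 2 : ℝ) := by
    rw [← Real.mul_rpow (by norm_num) (by positivity)]
    ring_nf
  rw [Function.comp_apply, exponent_eq, f_eq_sinKernel hτ, rpow_eq]
  ring
end

section
/- With E(τ) := e^{−πτ/6} ∏_{n=1}^∞ (1 − e^{−4πnτ}) for τ > 0 (i.e. the Dedekind eta function η(2iτ)), one has lim_{τ→0⁺} √(2τ) · e^{π/(24τ)} · E(τ) = 1. -/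
open Real Filter Set

/-!
The inversion formula `η(-1/z) = √(z/i) η(z)` at `z = it` exchanges the limit `t → 0⁺` with the
cusp `i∞`: it gives `√t e^{π/(12t)} η(it) = q^{-1/24} η(i/t)` with `q = e^{-2π/t}`, and the
right-hand side is the infinite product `∏ (1 - qⁿ)`, which tends to `1` as `q → 0`. The theorem is
the case `t = 2τ`.
-/

open Topology
open scoped ModularForm

local notation "𝕢" => Function.Periodic.qParam

lemma tendsto_tprod_one_sub_pow_succ_nhds_zero :
    Tendsto (fun q : ℂ ↦ ∏' n : ℕ, (1 - q ^ (n + 1))) (𝓝 0) (𝓝 1) := by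
  have hcont : ContinuousAt (fun q : ℂ ↦ ∏' n : ℕ, (1 - q ^ (n + 1))) 0 :=
    (ModularForm.differentiableOn_tprod_one_sub_pow.differentiableAt
      (Metric.ball_mem_nhds 0 one_pos)).continuousAt
  simpa using hcont.tendsto

lemma tendsto_eta_div_qParam_comap_im_atTop :
    Tendsto (fun z ↦ η z / 𝕢 24 z) (comap Complex.im atTop) (𝓝 1) := by
  have hq : Tendsto (𝕢 1) (comap Complex.im atTop) (𝓝 0) :=
    (Function.Periodic.qParam_tendsto one_pos).mono_right nhdsWithin_le_nhds
  exact (tendsto_tprod_one_sub_pow_succ_nhds_zero.comp hq).congr fun z ↦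
    (mul_div_cancel_left₀ _ (Function.Periodic.qParam_ne_zero z)).symm

lemma complexSqrt_ofReal_mul {r : ℝ} (hr : 0 ≤ r) (z : ℂ) :
    Complex.sqrt (r * z) = √r * Complex.sqrt z := by
  rcases hr.eq_or_lt with rfl | hr
  · simp
  rcases eq_or_ne z 0 with rfl | hz
  · simp
  have hr₀ : (r : ℂ) ≠ 0 := mod_cast hr.ne'
  have hsqrt : Real.exp (Real.log r / 2) = √r := by
    rw [← Real.log_sqrt hr.le, Real.exp_log (Real.sqrt_pos.2 hr)]
  rw [sqrt_eq_exp (mul_ne_zero hr₀ hz), sqrt_eq_exp hz, Complex.log_ofReal_mul hr hz, add_div,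
    Complex.exp_add, ← hsqrt, Complex.ofReal_exp, Complex.ofReal_div, Complex.ofReal_ofNat]

lemma eta_I_div_ofReal {t : ℝ} (ht : 0 < t) :
    η (Complex.I / t) = √t * η (t * Complex.I) := by
  have hmem : (t * Complex.I : ℂ) ∈ UpperHalfPlane.upperHalfPlaneSet := by simpa using ht
  have hinv : -1 / (t * Complex.I) = Complex.I / t := by
    rw [mul_comm, ← div_div, neg_div, one_div, Complex.inv_I, neg_neg]
  have hsqrt_I : Complex.sqrt Complex.I ≠ 0 := by simp [Complex.sqrt]
  calc η (Complex.I / t)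
      = (Complex.sqrt Complex.I)⁻¹ * (Complex.sqrt (t * Complex.I) * η (t * Complex.I)) := by
        simpa [hinv] using ModularForm.eta_comp_eq_csqrt_I_inv hmem
    _ = √t * η (t * Complex.I) := by
        rw [complexSqrt_ofReal_mul ht.le]
        field_simp

lemma qParam_I_div_ofReal (h t : ℝ) : 𝕢 h (Complex.I / t) = Real.exp (-(2 * π / (h * t))) := by
  rw [Function.Periodic.qParam, Complex.ofReal_exp]
  congr 1
  push_cast
  linear_combination (2 * π / (h * t) : ℂ) * Complex.I_sq

lemma tendsto_sqrt_mul_exp_mul_eta_mul_I :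
    Tendsto (fun t : ℝ ↦ √t * Real.exp (π / (12 * t)) * η (t * Complex.I))
      (𝓝[>] 0) (𝓝 1) := by
  have hcusp : Tendsto (fun t : ℝ ↦ Complex.I / t) (𝓝[>] 0) (comap Complex.im atTop) := by
    simpa [tendsto_comap_iff, Function.comp_def] using tendsto_inv_nhdsGT_zero (𝕜 := ℝ)
  refine (tendsto_eta_div_qParam_comap_im_atTop.comp hcusp).congr' ?_
  filter_upwards [self_mem_nhdsWithin] with t (ht : 0 < t)
  have hexp : 2 * π / (24 * t) = π / (12 * t) := by ring
  rw [Function.comp_apply, eta_I_div_ofReal ht, qParam_I_div_ofReal, hexp, Real.exp_neg,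
    Complex.ofReal_inv, div_inv_eq_mul, mul_right_comm]

lemma ofReal_dedekindEta (τ : ℝ) :
    (dedekindEta τ : ℂ) = η ((2 * τ : ℝ) * Complex.I) := by
  have hprod := Complex.isUniformEmbedding_ofReal.isClosedEmbedding.map_tprod
    (fun n : ℕ ↦ 1 - Real.exp (-4 * π * (n + 1) * τ)) (L := .unconditional ℕ)
    (g := Complex.ofRealHom)
  rw [dedekindEta, ModularForm.eta, Complex.ofReal_mul]
  congr 1
  · rw [Function.Periodic.qParam, Complex.ofReal_exp]
    congr 1
    push_cast
    linear_combination (-(π : ℂ) * τ / 6) * Complex.I_sq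
  · refine hprod.trans (tprod_congr fun n ↦ ?_)
    rw [ModularForm.eta_q_eq_cexp, Complex.ofRealHom_eq_coe]
    push_cast
    congr 2
    linear_combination (-4 * (π : ℂ) * (n + 1) * τ) * Complex.I_sq

/-- Small-`τ` asymptotics of the Dedekind eta function:
`lim_{τ→0⁺} √(2τ) e^{π/(24τ)} η(2iτ) = 1`. -/
theorem dedekindEta_small_tau_asymptotics :
    Tendsto (fun τ : ℝ => Real.sqrt (2 * τ) * Real.exp (π / (24 * τ)) * dedekindEta τ)
      (nhdsWithin 0 (Ioi 0)) (nhds 1) := by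
  have hdouble : Tendsto (fun τ : ℝ ↦ 2 * τ) (𝓝[>] 0) (𝓝[>] 0) :=
    tendsto_iff_comap.2 (comap_mulLeft_nhdsGT_zero two_pos).ge
  rw [← tendsto_ofReal_iff, Complex.ofReal_one]
  refine (tendsto_sqrt_mul_exp_mul_eta_mul_I.comp hdouble).congr fun τ ↦ ?_
  have hexp : π / (12 * (2 * τ)) = π / (24 * τ) := by ring
  simp only [Function.comp_apply, hexp, ofReal_dedekindEta, Complex.ofReal_mul]
end

section
/- For every θ ∈ (−π, π) and every real x ≠ 0, the series Σ_{n=1}^∞ (−1)^{n−1} n sin(nθ) / (n² + x²) converges and equals (π/2) · sinh(xθ) / sinh(πx). -/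
open Real Filter Set

/-!
The terms of the series are, up to the factor `2 * sinh (π * x)`, the integrals over `[-π, π]` of
`t ↦ sinh (x * t)` against `cos (n * (t - θ))`, so the partial sums are integrals against the
Dirichlet kernel centred at `θ`. By Dini's criterion these converge to `π * sinh (x * θ)`:
subtracting the value at `θ` and dividing by `t - θ` leaves an integrable function times
`sin ((N + 1 / 2) * (t - θ))`, to which the Riemann–Lebesgue lemma applies.
-/

open MeasureTheory
open scoped FourierTransform Topology

section RiemannLebesgue

variable {g : ℝ → ℝ}

lemma integral_mul_sin_eq_im_fourier (hg : Integrable g) (w : ℝ) :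
    ∫ t, g t * sin (w * t) = (𝓕 (fun t => (g t : ℂ)) (-w / (2 * π))).im := by
  have hint : Integrable fun t => 𝐞 (-inner ℝ t (-w / (2 * π))) • (g t : ℂ) :=
    (Real.fourierIntegral_convergent_iff _).2 hg.ofReal
  rw [Real.fourier_eq, ← Complex.imCLM_apply, ← Complex.imCLM.integral_comp_comm hint]
  congr 1 with t
  have hphase : 2 * π * -inner ℝ t (-w / (2 * π)) = w * t := by
    simp only [inner_apply]
    field_simp
  rw [Circle.smul_def, Real.fourierChar_apply, hphase, smul_eq_mul, Complex.imCLM_apply,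
    Complex.im_mul_ofReal, Complex.exp_ofReal_mul_I_im, mul_comm]

lemma tendsto_integral_mul_sin_cocompact (hg : Integrable g) (c : ℝ) :
    Tendsto (fun w : ℝ => ∫ t, g t * sin (w * (t - c))) (cocompact ℝ) (𝓝 0) := by
  have hshift (w : ℝ) : ∫ t, g t * sin (w * (t - c)) = ∫ t, g (t + c) * sin (w * t) := by
    simpa using integral_sub_right_eq_self (fun t => g (t + c) * sin (w * t)) c
  have hfreq : Tendsto (fun w : ℝ => -w / (2 * π)) (cocompact ℝ) (cocompact ℝ) := by
    have hc : -(2 * π)⁻¹ ≠ 0 := by simp [pi_ne_zero]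
    refine (tendsto_cocompact_mul_right₀ hc).congr fun w => ?_
    ring
  simp_rw [hshift, integral_mul_sin_eq_im_fourier (hg.comp_add_right c)]
  exact (Complex.continuous_im.tendsto 0).comp ((Real.zero_at_infty_fourier _).comp hfreq)

lemma tendsto_setIntegral_mul_sin_cocompact {s : Set ℝ} (hs : MeasurableSet s)
    (hg : IntegrableOn g s) (c : ℝ) :
    Tendsto (fun w : ℝ => ∫ t in s, g t * sin (w * (t - c))) (cocompact ℝ) (𝓝 0) := by
  simp_rw [← integral_indicator hs, indicator_mul_left]
  exact tendsto_integral_mul_sin_cocompact ((integrable_indicator_iff hs).2 hg) c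

lemma tendsto_intervalIntegral_mul_sin_cocompact {a b : ℝ}
    (hg : IntervalIntegrable g volume a b) (c : ℝ) :
    Tendsto (fun w : ℝ => ∫ t in a..b, g t * sin (w * (t - c))) (cocompact ℝ) (𝓝 0) := by
  simpa only [intervalIntegral, sub_zero] using
    (tendsto_setIntegral_mul_sin_cocompact measurableSet_Ioc hg.1 c).sub
      (tendsto_setIntegral_mul_sin_cocompact measurableSet_Ioc hg.2 c)

end RiemannLebesgue

lemma intervalIntegrable_slope {E : Type*} [NormedAddCommGroup E] [NormedSpace ℝ E] {f : ℝ → E}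
    {a b θ : ℝ} (hf : ContinuousOn f (uIcc a b)) (hθ : DifferentiableAt ℝ f θ) :
    IntervalIntegrable (slope f θ) volume a b := by
  have hcont : ContinuousOn (dslope f θ) (uIcc a b) := fun t ht => by
    rcases eq_or_ne t θ with rfl | hne
    · exact (continuousAt_dslope_same.2 hθ).continuousWithinAt
    · exact (continuousWithinAt_dslope_of_ne hne).2 (hf t ht)
  refine hcont.intervalIntegrable.congr_ae (ae_restrict_of_ae ?_)
  filter_upwards [volume.ae_ne θ] with t ht using dslope_of_ne f ht

lemma mul_sinc (u : ℝ) : u * sinc u = sin u := by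
  rcases eq_or_ne u 0 with rfl | hu
  · simp
  · rw [sinc_of_ne_zero hu, mul_div_cancel₀ _ hu]

lemma sinc_ne_zero_of_abs_lt_pi {u : ℝ} (hu : |u| < π) : sinc u ≠ 0 := by
  rcases eq_or_ne u 0 with rfl | hne
  · simp
  · obtain ⟨hlo, hhi⟩ := abs_lt.1 hu
    rw [sinc_of_ne_zero hne]
    exact div_ne_zero (fun hsin => hne ((sin_eq_zero_iff_of_lt_of_lt hlo hhi).1 hsin)) hne

/-- The Dirichlet kernel `1/2 + cos u + ⋯ + cos (N u)`, normalised to have integral `π` over a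
period. -/
noncomputable def dirichletKernel (N : ℕ) (u : ℝ) : ℝ :=
  1 / 2 + ∑ n ∈ Finset.range N, cos ((n + 1 : ℕ) * u)

@[fun_prop]
lemma continuous_dirichletKernel (N : ℕ) : Continuous (dirichletKernel N) := by
  unfold dirichletKernel
  fun_prop

lemma two_mul_sin_half_mul_dirichletKernel (N : ℕ) (u : ℝ) :
    2 * sin (u / 2) * dirichletKernel N u = sin ((N + 1 / 2) * u) := by
  induction N with
  | zero =>
    simp only [dirichletKernel, Finset.range_zero, Finset.sum_empty, Nat.cast_zero]
    ring_nf
  | succ N ih =>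
    have hsucc : dirichletKernel (N + 1) u = dirichletKernel N u + cos ((N + 1 : ℕ) * u) := by
      simp only [dirichletKernel, Finset.sum_range_succ, add_assoc]
    have hlo : ((N : ℝ) + 1 / 2) * u = (N + 1 : ℕ) * u - u / 2 := by push_cast; ring
    have hhi : (((N + 1 : ℕ) : ℝ) + 1 / 2) * u = (N + 1 : ℕ) * u + u / 2 := by ring
    rw [hsucc, mul_add, ih, hlo, hhi, sin_sub, sin_add]
    ring

lemma integral_cos_nat_mul_eq_zero {n : ℕ} (hn : n ≠ 0) (a : ℝ) :
    ∫ u in a..a + 2 * π, cos (n * u) = 0 := by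
  rw [intervalIntegral.integral_comp_mul_left _ (Nat.cast_ne_zero.2 hn), integral_cos, mul_add,
    sin_add_nat_mul_two_pi, sub_self, smul_zero]

lemma integral_dirichletKernel (N : ℕ) (a : ℝ) :
    ∫ u in a..a + 2 * π, dirichletKernel N u = π := by
  simp only [dirichletKernel]
  rw [intervalIntegral.integral_add (by simp) (Continuous.intervalIntegrable (by fun_prop) _ _),
    intervalIntegral.integral_finsetSum
      fun n _ => Continuous.intervalIntegrable (by fun_prop) _ _,
    Finset.sum_eq_zero fun n _ => integral_cos_nat_mul_eq_zero n.succ_ne_zero a,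
    intervalIntegral.integral_const, smul_eq_mul]
  ring

lemma integral_dirichletKernel_sub (N : ℕ) (a θ : ℝ) :
    ∫ t in a..a + 2 * π, dirichletKernel N (t - θ) = π := by
  rw [intervalIntegral.integral_comp_sub_right, add_sub_right_comm, integral_dirichletKernel]

lemma sub_mul_dirichletKernel (f : ℝ → ℝ) (N : ℕ) {θ t : ℝ}
    (hsinc : sinc ((t - θ) / 2) ≠ 0) :
    (f t - f θ) * dirichletKernel N (t - θ) =
      slope f θ t / sinc ((t - θ) / 2) * sin ((N + 1 / 2) * (t - θ)) := by
  rw [← two_mul_sin_half_mul_dirichletKernel, ← mul_sinc, ← vsub_eq_sub (f t),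
    ← sub_smul_slope f θ t, smul_eq_mul]
  field_simp

lemma tendsto_integral_mul_dirichletKernel_of_intervalIntegrable_slope {f : ℝ → ℝ} {a θ : ℝ}
    (hθ : θ ∈ Ioo a (a + 2 * π))
    (hf : IntervalIntegrable (slope f θ) volume a (a + 2 * π)) :
    Tendsto (fun N : ℕ => ∫ t in a..a + 2 * π, f t * dirichletKernel N (t - θ)) atTop
      (𝓝 (π * f θ)) := by
  set h : ℝ → ℝ := fun t => slope f θ t / sinc ((t - θ) / 2)
  have hsinc : ∀ t ∈ uIcc a (a + 2 * π), sinc ((t - θ) / 2) ≠ 0 := by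
    rw [uIcc_of_le (hθ.1.trans hθ.2).le]
    exact fun t ht => sinc_ne_zero_of_abs_lt_pi <|
      abs_lt.2 ⟨by linarith [ht.1, hθ.2], by linarith [ht.2, hθ.1]⟩
  have hh : IntervalIntegrable h volume a (a + 2 * π) := by
    simp only [h, div_eq_mul_inv]
    exact hf.mul_continuousOn (ContinuousOn.inv₀ (by fun_prop) hsinc)
  have hsplit (N : ℕ) : ∫ t in a..a + 2 * π, f t * dirichletKernel N (t - θ) =
      (∫ t in a..a + 2 * π, h t * sin ((N + 1 / 2) * (t - θ))) + π * f θ := by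
    have hpoint : ∀ t ∈ uIcc a (a + 2 * π), f t * dirichletKernel N (t - θ) =
        h t * sin ((N + 1 / 2) * (t - θ)) + f θ * dirichletKernel N (t - θ) := fun t ht => by
      rw [← sub_mul_dirichletKernel f N (hsinc t ht)]
      ring
    rw [intervalIntegral.integral_congr hpoint, intervalIntegral.integral_add
        (hh.mul_continuousOn (by fun_prop)) (Continuous.intervalIntegrable (by fun_prop) _ _),
      intervalIntegral.integral_const_mul, integral_dirichletKernel_sub, mul_comm π]
  have hfreq : Tendsto (fun N : ℕ => (N : ℝ) + 1 / 2) atTop (cocompact ℝ) :=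
    (tendsto_atTop_add_const_right _ _ tendsto_natCast_atTop_atTop).mono_right atTop_le_cocompact
  simpa only [hsplit, zero_add, Function.comp_def] using
    ((tendsto_intervalIntegral_mul_sin_cocompact hh θ).comp hfreq).add_const (π * f θ)

lemma sq_add_sq_mul_integral_sinh_mul_cos (a b x ω θ : ℝ) :
    (ω ^ 2 + x ^ 2) * ∫ t in a..b, sinh (x * t) * cos (ω * (t - θ)) =
      (x * (cosh (x * b) * cos (ω * (b - θ))) + ω * (sinh (x * b) * sin (ω * (b - θ)))) -
      (x * (cosh (x * a) * cos (ω * (a - θ))) + ω * (sinh (x * a) * sin (ω * (a - θ)))) := by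
  have hderiv (t : ℝ) : HasDerivAt
      (fun t => x * (cosh (x * t) * cos (ω * (t - θ))) + ω * (sinh (x * t) * sin (ω * (t - θ))))
      ((ω ^ 2 + x ^ 2) * (sinh (x * t) * cos (ω * (t - θ)))) t := by
    have hx : HasDerivAt (fun t => x * t) x t := by
      simpa using (hasDerivAt_id t).const_mul x
    have hω : HasDerivAt (fun t => ω * (t - θ)) ω t := by
      simpa using ((hasDerivAt_id t).sub_const θ).const_mul ω
    refine (((hx.cosh.mul hω.cos).const_mul x).add
      ((hx.sinh.mul hω.sin).const_mul ω)).congr_deriv ?_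
    ring
  rw [← intervalIntegral.integral_const_mul]
  exact intervalIntegral.integral_eq_sub_of_hasDerivAt (fun t _ => hderiv t)
    (Continuous.intervalIntegrable (by fun_prop) _ _)

lemma integral_sinh_mul_cos_nat_mul_sub {x : ℝ} (hx : x ≠ 0) (θ : ℝ) (n : ℕ) :
    ∫ t in -π..π, sinh (x * t) * cos (n * (t - θ)) =
      2 * sinh (π * x) * ((-1) ^ (n + 1) * n * sin (n * θ) / (n ^ 2 + x ^ 2)) := by
  have hne : (n : ℝ) ^ 2 + x ^ 2 ≠ 0 := by positivity
  have hlo : (n : ℝ) * (-π - θ) = -(n * θ + n * π) := by ring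
  have hhi : (n : ℝ) * (π - θ) = n * π - n * θ := by ring
  rw [← mul_div_assoc, eq_div_iff hne, mul_comm, sq_add_sq_mul_integral_sinh_mul_cos,
    hlo, hhi, mul_neg, mul_comm x π]
  simp only [cosh_neg, sinh_neg, cos_neg, sin_neg, cos_add, cos_sub, sin_add, sin_sub,
    cos_nat_mul_pi, sin_nat_mul_pi]
  ring

lemma integral_sinh_mul_dirichletKernel {x : ℝ} (hx : x ≠ 0) (θ : ℝ) (N : ℕ) :
    ∫ t in -π..π, sinh (x * t) * dirichletKernel N (t - θ) =
      2 * sinh (π * x) * ∑ n ∈ Finset.range (N + 1),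
        (-1) ^ (n + 1) * n * sin (n * θ) / (n ^ 2 + x ^ 2) := by
  have hmean : ∫ t in -π..π, sinh (x * t) = 0 := by
    simpa using integral_sinh_mul_cos_nat_mul_sub hx θ 0
  simp only [dirichletKernel, mul_add, Finset.mul_sum]
  rw [intervalIntegral.integral_add (Continuous.intervalIntegrable (by fun_prop) _ _)
      (Continuous.intervalIntegrable (by fun_prop) _ _),
    intervalIntegral.integral_mul_const, hmean, intervalIntegral.integral_finsetSum
      fun n _ => Continuous.intervalIntegrable (by fun_prop) _ _, Finset.sum_range_succ']
  simp only [integral_sinh_mul_cos_nat_mul_sub hx]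
  simp

/-- The classical summation formula (Gradshteyn–Ryzhik 1.445.4): for every `θ ∈ (−π, π)` and
every real `x ≠ 0`, the series `Σ_{n=1}^∞ (−1)^{n−1} n sin(nθ)/(n² + x²)` converges (in the
sense of partial sums) and equals `(π/2) sinh(xθ)/sinh(πx)`. The `n = 0` term vanishes, and
for `n ≥ 1` one has `(−1)^{n+1} = (−1)^{n−1}`. -/
theorem sum_alternating_sin_div (θ : ℝ) (hθ : θ ∈ Ioo (-π) π) (x : ℝ) (hx : x ≠ 0) :
    Tendsto (fun N : ℕ =>
        ∑ n ∈ Finset.range N, (-1 : ℝ) ^ (n + 1) * n * Real.sin (n * θ) / (n ^ 2 + x ^ 2))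
      atTop (nhds (π / 2 * Real.sinh (x * θ) / Real.sinh (π * x))) := by
  have hperiod : -π + 2 * π = π := by ring
  have hsinh : 2 * sinh (π * x) ≠ 0 :=
    mul_ne_zero two_ne_zero (sinh_ne_zero.2 (mul_ne_zero pi_ne_zero hx))
  have hdini := tendsto_integral_mul_dirichletKernel_of_intervalIntegrable_slope (a := -π)
    (by rwa [hperiod])
    (intervalIntegrable_slope (f := fun t => sinh (x * t)) (by fun_prop) (by fun_prop))
  simp only [hperiod, integral_sinh_mul_dirichletKernel hx] at hdini
  have hlim := hdini.div_const (2 * sinh (π * x))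
  simp only [mul_div_cancel_left₀ _ hsinh] at hlim
  rw [← tendsto_add_atTop_iff_nat 1]
  rwa [mul_div_mul_comm, ← mul_div_assoc] at hlim
end
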